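/- arXiv:2604.26950 — 3 statements merged into one kernel-verified Lean document; each statement's English description precedes it below -/
import Mathlib

section
/- Let K be a field of characteristic zero, w a weighting of K^n, and P : Fin n → MvPolynomial (Fin n) K a tuple that is quasi-homogeneous of weighted degree 0, i.e. every multi-index β in the support of P^i satisfies ⟨w,β⟩ = w i. Let A : Matrix (Fin n) (Fin n) K be given by A i j = (coefficient of e_j in P^i), and let λ : Fin n → K be such that for every value c attained by w, the characteristic polynomial of the square submatrix of A on {i : w i = c} equals the product over {i : w i = c} of (T − λ i). Fix an integer k ≥ 1 and assume non-resonance of weighted degree k: for every i and every finitely supported α : Fin n → ℕ with ⟨w,α⟩ = w i + k, one has Σ_j (α j)·(λ j) ≠ λ i. Then the adjoint operator ad_P is bijective on quasi-homogeneous polynomial vector fields of weighted degree k: for every tuple Y : Fin n → MvPolynomial (Fin n) K with every β in the support of Y^i satisfying ⟨w,β⟩ = w i + k, there exists a unique tuple U : Fin n → MvPolynomial (Fin n) K with the same quasi-homogeneity property such that for every i, Σ_j (P^j · pderiv j (U^i) − U^j · pderiv j (P^i)) = Y^i. -/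
inductive InG {K R : Type*} [Field K] [CommRing R] [Algebra K R] (D : Derivation K R R) (S : Set K) : R → Prop
  | zero : InG D S 0
  | step (s : K) (f : R) : s ∈ S → InG D S (D f - s • f) → InG D S f

namespace InG
variable {K R : Type*} [Field K] [CommRing R] [Algebra K R] {D : Derivation K R R} {S T V : Set K}

theorem sub_smul_mem {f : R} (c : K) (h : InG D S f) : InG D S (D f - c • f) := by
  induction h with
  | zero => simpa using InG.zero
  | step s f hs _ ih =>
    refine InG.step s _ hs ?_
    convert ih using 1
    simp only [map_sub, Derivation.map_smul, smul_sub, smul_comm s c]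
    abel

theorem add {f g : R} (hf : InG D S f) (hg : InG D S g) : InG D S (f + g) := by
  induction hf generalizing g with
  | zero => simpa using hg
  | step s f hs _ ih =>
    refine InG.step s _ hs ?_
    convert ih (hg.sub_smul_mem s) using 1
    simp only [map_add, smul_add]
    abel

theorem smul {f : R} (c : K) (hf : InG D S f) : InG D S (c • f) := by
  induction hf with
  | zero => simpa using InG.zero
  | step s f hs _ ih =>
    refine InG.step s _ hs ?_
    convert ih using 1
    simp only [Derivation.map_smul, smul_sub, smul_comm s c]

theorem mul (hV : ∀ s ∈ S, ∀ t ∈ T, s + t ∈ V) {f g : R} (hf : InG D S f) (hg : InG D T g) :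
    InG D V (f * g) := by
  induction hf generalizing g with
  | zero => simpa using InG.zero
  | step s f hs hf' ih =>
    induction hg with
    | zero => simpa using InG.zero
    | step t g ht hg' ih2 =>
      refine InG.step (s + t) _ (hV s hs t ht) ?_
      convert (ih (InG.step t g ht hg')).add ih2 using 1
      simp only [Derivation.leibniz, smul_eq_mul, sub_mul, mul_sub, add_smul, smul_mul_assoc,
        mul_smul_comm]
      ring

theorem eig {f : R} (c : K) (hc : c ∉ S) (hf : InG D S f) (h : D f - c • f = 0) : f = 0 := by
  induction hf with
  | zero => rfl
  | step s f hs hf' ih =>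
    have h' : D f - s • f = (c - s) • f := by
      rw [sub_eq_zero] at h; rw [h, sub_smul]
    have := ih (by rw [h', Derivation.map_smul, smul_comm c, ← smul_sub, h, smul_zero])
    rw [h', smul_eq_zero] at this
    rcases this with h1 | h1
    · exact absurd (sub_eq_zero.1 h1 ▸ hs) hc
    · exact h1

theorem one (h : (0:K) ∈ S) : InG D S (1 : R) :=
  InG.step 0 _ h (by simpa using InG.zero)

/-- as a submodule -/
def sm (D : Derivation K R R) (S : Set K) : Submodule K R where
  carrier := {f | InG D S f}
  zero_mem' := InG.zero
  add_mem' := InG.add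
  smul_mem' c _ h := InG.smul c h

theorem D_mem {f : R} (h : InG D S f) : InG D S (D f) := by
  simpa using h.sub_smul_mem 0

open Polynomial in
theorem of_prod {ι : Type*} (s : Finset ι) (l : ι → K) (hl : ∀ i ∈ s, l i ∈ S) (f : R)
    (h : InG D S (aeval (D : R →ₗ[K] R) (∏ i ∈ s, (X - C (l i))) f)) : InG D S f := by
  classical
  induction s using Finset.induction_on with
  | empty => simpa using h
  | insert a s ha ih =>
    rw [Finset.prod_insert ha] at h
    refine ih (fun i hi => hl i (Finset.mem_insert_of_mem hi)) (InG.step (l a) _ (hl a (Finset.mem_insert_self _ _)) ?_)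
    simpa [Module.algebraMap_end_apply] using h

open Polynomial in
theorem eq_zero_of_prod {ι : Type*} (s : Finset ι) (l : ι → K) (hl : ∀ i ∈ s, l i ∉ S) (f : R)
    (hf : InG D S f)
    (h : aeval (D : R →ₗ[K] R) (∏ i ∈ s, (X - C (l i))) f = 0) : f = 0 := by
  classical
  induction s using Finset.induction_on generalizing f with
  | empty => simpa using h
  | insert a s ha ih =>
    rw [Finset.prod_insert ha, mul_comm] at h
    refine eig (l a) (hl a (Finset.mem_insert_self _ _)) hf ?_
    refine ih (fun i hi => hl i (Finset.mem_insert_of_mem hi)) _ (hf.sub_smul_mem _) ?_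
    simpa [Module.algebraMap_end_apply] using h
end InG

open Polynomial in
theorem ch_aux {K M ι : Type*} [Field K] [AddCommGroup M] [Module K M] [Fintype ι] [DecidableEq ι]
    (D : Module.End K M) (G : Submodule K M) (hG : ∀ g ∈ G, D g ∈ G) (A : Matrix ι ι K) (v : ι → M)
    (h : ∀ i, D (v i) - ∑ j, A i j • v j ∈ G) (i : ι) : aeval D A.charpoly (v i) ∈ G := by
  have key : ∀ p : K[X], ∀ i, aeval D p (v i) - ∑ j, (aeval A p) i j • v j ∈ G := by
    intro p
    induction p using Polynomial.induction_on' with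
    | add p q hp hq =>
      intro i
      convert G.add_mem (hp i) (hq i) using 1
      simp only [map_add, LinearMap.add_apply, Matrix.add_apply, add_smul, Finset.sum_add_distrib]
      abel
    | monomial n a =>
      have : ∀ i, (D ^ n) (v i) - ∑ j, (A ^ n) i j • v j ∈ G := by
        induction n with
        | zero => intro i; simp [Matrix.one_apply]
        | succ n ih =>
          intro i
          convert G.add_mem (hG _ (ih i)) (G.sum_mem (t := Finset.univ)
            (fun j _ => G.smul_mem ((A ^ n) i j) (h j))) using 1
          rw [pow_succ', pow_succ]
          simp only [Module.End.mul_apply, map_sub, map_sum, map_smul, smul_sub, Finset.sum_sub_distrib,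
            Matrix.mul_apply, Finset.sum_smul, Finset.smul_sum, smul_smul]
          rw [Finset.sum_comm (f := fun x y => ((A ^ n) i y * A y x) • v x)]
          abel
      intro i
      convert G.smul_mem a (this i) using 1
      simp [Polynomial.aeval_monomial, Module.algebraMap_end_apply, smul_sub, Finset.smul_sum, smul_smul,
        Matrix.algebraMap_eq_diagonal, Matrix.diagonal_mul]
  simpa [Matrix.aeval_self_charpoly] using key A.charpoly i

open MvPolynomial

theorem weight_eq_sum {n : ℕ} (w : Fin n → ℕ) (β : Fin n →₀ ℕ) :
    Finsupp.weight w β = ∑ j, w j * β j := by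
  rw [Finsupp.weight_apply, Finsupp.sum_fintype _ _ (by simp)]
  simp [mul_comm]

theorem qh_iff {K : Type*} [Field K] {n : ℕ} (w : Fin n → ℕ) (m : ℕ) (φ : MvPolynomial (Fin n) K) :
    (∀ β ∈ φ.support, ∑ j, w j * β j = m) ↔ IsWeightedHomogeneous w φ m := by
  simp [IsWeightedHomogeneous, weight_eq_sum]

theorem pderiv_wh {K : Type*} [Field K] {n : ℕ} (w : Fin n → ℕ) (m m' : ℕ) (φ : MvPolynomial (Fin n) K)
    (h : IsWeightedHomogeneous w φ m) (j : Fin n) (h' : m' + w j = m) :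
    IsWeightedHomogeneous w (pderiv j φ) m' := by
  intro d hd
  rw [coeff_pderiv] at hd
  have := h (left_ne_zero_of_mul hd)
  rw [map_add, Finsupp.weight_single] at this
  simp at this
  omega

theorem pderiv_wh_zero {K : Type*} [Field K] {n : ℕ} (w : Fin n → ℕ) (m : ℕ) (φ : MvPolynomial (Fin n) K)
    (h : IsWeightedHomogeneous w φ m) (j : Fin n) (h' : m < w j) :
    pderiv j φ = 0 := by
  ext d
  rw [coeff_zero]
  by_contra hd
  rw [coeff_pderiv] at hd
  have := h (left_ne_zero_of_mul hd)
  rw [map_add, Finsupp.weight_single] at this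
  simp at this
  omega

theorem weight_pos_zero {n : ℕ} {w : Fin n → ℕ} (hw1 : ∀ i, 1 ≤ w i) (d : Fin n →₀ ℕ)
    (h : Finsupp.weight w d = 0) : d = 0 := by
  rw [weight_eq_sum] at h
  ext j
  have := Finset.sum_eq_zero_iff.1 h j (Finset.mem_univ _)
  have h1 := hw1 j
  rcases Nat.mul_eq_zero.1 this with h2 | h2
  · omega
  · simpa using h2

theorem weight_ge {n : ℕ} {w : Fin n → ℕ} (d : Fin n →₀ ℕ) (j : Fin n) (h : d j ≠ 0) :
    ∃ d', d = d' + Finsupp.single j 1 ∧ Finsupp.weight w d = Finsupp.weight w d' + w j := by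
  have h1 : d = (d - Finsupp.single j 1) + Finsupp.single j 1 := by
    rw [tsub_add_cancel_of_le]
    simpa [Finsupp.single_le_iff] using Nat.one_le_iff_ne_zero.2 h
  refine ⟨_, h1, ?_⟩
  conv_lhs => rw [h1]
  rw [map_add, Finsupp.weight_single]
  simp

theorem pderiv_wh_const {K : Type*} [Field K] {n : ℕ} (w : Fin n → ℕ) (hw1 : ∀ i, 1 ≤ w i)
    (φ : MvPolynomial (Fin n) K) (j : Fin n)
    (h : IsWeightedHomogeneous w φ (w j)) :
    pderiv j φ = C (coeff (Finsupp.single j 1) φ) := by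
  have h0 := pderiv_wh w (w j) 0 φ h j (by simp)
  ext d
  by_cases hd : d = 0
  · subst hd; simp [coeff_pderiv]
  · rw [coeff_C, if_neg (Ne.symm hd)]
    by_contra hc
    exact hd (weight_pos_zero hw1 d (h0 hc))

def SS {K : Type*} [Field K] {n : ℕ} (w : Fin n → ℕ) (l : Fin n → K) (m : ℕ) : Set K :=
  {s | ∃ α : Fin n →₀ ℕ, ∑ j, w j * α j = m ∧ ∑ j, (α j : K) * l j = s}

theorem SS_add {K : Type*} [Field K] {n : ℕ} (w : Fin n → ℕ) (l : Fin n → K) (m m' : ℕ) :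
    ∀ s ∈ SS w l m, ∀ t ∈ SS w l m', s + t ∈ SS w l (m + m') := by
  rintro s ⟨a, ha, rfl⟩ t ⟨b, hb, rfl⟩
  refine ⟨a + b, ?_, ?_⟩
  · simp [mul_add, Finset.sum_add_distrib, ha, hb]
  · simp [add_mul, Finset.sum_add_distrib]

theorem SS_l {K : Type*} [Field K] {n : ℕ} (w : Fin n → ℕ) (l : Fin n → K) (i : Fin n) :
    l i ∈ SS w l (w i) := by
  refine ⟨Finsupp.single i 1, ?_, ?_⟩ <;> simp [Finsupp.single_apply]

theorem SS_zero {K : Type*} [Field K] {n : ℕ} (w : Fin n → ℕ) (l : Fin n → K) :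
    (0 : K) ∈ SS w l 0 := ⟨0, by simp, by simp⟩

section
variable {K : Type*} [Field K] {n : ℕ} (w : Fin n → ℕ) (l : Fin n → K)
  (D : Derivation K (MvPolynomial (Fin n) K) (MvPolynomial (Fin n) K))

theorem InG.prodX (p : ℕ) (d : Fin n →₀ ℕ) (hp : Finsupp.weight w d = p)
    (h : ∀ j, d j ≠ 0 → InG D (SS w l (w j)) (X j : MvPolynomial (Fin n) K)) :
    InG D (SS w l p) (monomial d 1 : MvPolynomial (Fin n) K) := by
  subst hp
  induction d using Finsupp.induction_linear with
  | zero => simpa using InG.one (SS_zero w l)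
  | add f g hf hg =>
    have := InG.mul (SS_add w l _ _) (hf fun j hj => h j (by simp; omega)) (hg fun j hj => h j (by simp; omega))
    rw [monomial_mul, one_mul, ← map_add] at this
    exact this
  | single a b =>
    rcases eq_or_ne b 0 with rfl | hb
    · simpa using InG.one (SS_zero w l)
    have hX := h a (by simpa using hb)
    clear h hb
    induction b with
    | zero => simpa using InG.one (SS_zero w l)
    | succ b ih =>
      have := InG.mul (SS_add w l _ _) ih hX
      rw [X, monomial_mul, one_mul, ← Finsupp.single_add] at this
      convert this using 2
      rw [Finsupp.single_add, map_add]
      simp [Finsupp.weight_single]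

theorem InG.of_support (p : ℕ) (Q : MvPolynomial (Fin n) K)
    (h : ∀ d, coeff d Q ≠ 0 → Finsupp.weight w d = p ∧
      ∀ j, d j ≠ 0 → InG D (SS w l (w j)) (X j : MvPolynomial (Fin n) K)) :
    InG D (SS w l p) Q := by
  rw [Q.as_sum]
  refine (InG.sm D (SS w l p)).sum_mem fun d hd => ?_
  have h2 := h d (by simpa using hd)
  have := (InG.prodX w l D p d h2.1 h2.2).smul (coeff d Q)
  rw [smul_monomial, smul_eq_mul, mul_one] at this
  exact this
end

section
variable {K : Type*} [Field K] {n : ℕ}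
    (w : Fin n → ℕ) (hw1 : ∀ i, 1 ≤ w i)
    (P : Fin n → MvPolynomial (Fin n) K)
    (hP : ∀ i, IsWeightedHomogeneous w (P i) (w i))
    (A : Matrix (Fin n) (Fin n) K)
    (hA : ∀ i j, A i j = MvPolynomial.coeff (Finsupp.single j 1) (P i))
    (l : Fin n → K)
    (hl : ∀ c : ℕ, c ∈ Set.range w →
      (A.submatrix
          (Subtype.val : {i : Fin n // w i = c} → Fin n)
          (Subtype.val : {i : Fin n // w i = c} → Fin n)).charpoly =
        ∏ i : {i : Fin n // w i = c}, (Polynomial.X - Polynomial.C (l i.val)))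
include hw1 hP hA hl

theorem InG.X_mem (D : Derivation K (MvPolynomial (Fin n) K) (MvPolynomial (Fin n) K))
    (hD : ∀ i, D (X i) = P i) (c : ℕ) :
    ∀ i, w i = c → InG D (SS w l c) (X i : MvPolynomial (Fin n) K) := by
  induction c using Nat.strong_induction_on with
  | _ c ih =>
  intro i hi
  have key := ch_aux (D : MvPolynomial (Fin n) K →ₗ[K] MvPolynomial (Fin n) K)
    (InG.sm D (SS w l c)) (fun g hg => InG.D_mem hg)
    (A.submatrix (Subtype.val : {i : Fin n // w i = c} → Fin n)
          (Subtype.val : {i : Fin n // w i = c} → Fin n)) (fun i => X i.1) ?_ ⟨i, hi⟩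
  · rw [hl c ⟨i, hi⟩] at key
    refine InG.of_prod Finset.univ (fun i : {i : Fin n // w i = c} => l i.1) ?_ _ key
    rintro ⟨j, hj⟩ -
    exact hj ▸ SS_l w l j
  · rintro ⟨i, hi⟩
    refine InG.of_support w l D c _ fun d hd => ?_
    simp only [Derivation.coeFn_coe, hD, Matrix.submatrix_apply, coeff_sub, coeff_sum, coeff_smul,
      coeff_X, smul_eq_mul] at hd
    by_cases hh : ∃ j, w j = c ∧ Finsupp.single j 1 = d
    · obtain ⟨j, hj, rfl⟩ := hh
      exfalso
      apply hd
      rw [Finset.sum_eq_single (⟨j, hj⟩ : {i : Fin n // w i = c})]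
      · simp [hA, coeff_X']
      · rintro ⟨b, hb⟩ - hbj
        have : b ≠ j := fun h => hbj (by subst h; rfl)
        simp [Finsupp.single_left_inj, this]
      · simp
    · push Not at hh
      rw [Finset.sum_eq_zero, sub_zero] at hd
      · have hw' := hP i hd
        rw [hi] at hw'
        refine ⟨hw', fun j hj => ih (w j) ?_ j rfl⟩
        obtain ⟨d', h1, h2⟩ := weight_ge (w := w) d j hj
        rcases Nat.eq_zero_or_pos (Finsupp.weight w d') with h0 | h0
        · have := weight_pos_zero hw1 _ h0
          subst this
          exact absurd (by simp [h1]) (hh j (by omega))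
        · omega
      · rintro ⟨j, hj⟩ -
        simp [hh j hj]

theorem inj_aux (k : ℕ)
    (hres : ∀ (i : Fin n) (α : Fin n →₀ ℕ), (∑ j, w j * α j) = w i + k →
      (∑ j, (α j : K) * l j) ≠ l i)
    (U : Fin n → MvPolynomial (Fin n) K)
    (hU : ∀ i, IsWeightedHomogeneous w (U i) (w i + k))
    (h : ∀ i, (∑ j, (P j * pderiv j (U i) - U j * pderiv j (P i))) = 0) : U = 0 := by
  let D : Derivation K (MvPolynomial (Fin n) K) (MvPolynomial (Fin n) K) :=
    ∑ j, P j • pderiv j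
  have hDa : ∀ f, D f = ∑ j, P j * pderiv j f := by
    intro f
    simp only [D]
    rw [← Derivation.coeFnAddMonoidHom_apply, map_sum, Finset.sum_apply]
    simp
  have hD : ∀ i, D (X i) = P i := by
    intro i
    rw [hDa, Finset.sum_eq_single i]
    · simp
    · intro j _ hj
      simp [pderiv_X_of_ne hj.symm]
    · simp
  have hX := InG.X_mem w hw1 P hP A hA l hl D hD
  have hUG : ∀ i, InG D (SS w l (w i + k)) (U i) := fun i =>
    InG.of_support w l D _ _ fun d hd => ⟨hU i hd, fun j _ => hX _ j rfl⟩
  have main : ∀ c, ∀ i, w i = c → U i = 0 := by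
    intro c
    induction c using Nat.strong_induction_on with
    | _ c ih =>
    intro i hi
    have key := ch_aux (D : MvPolynomial (Fin n) K →ₗ[K] MvPolynomial (Fin n) K)
      ⊥ (by simp)
      (A.submatrix (Subtype.val : {i : Fin n // w i = c} → Fin n)
          (Subtype.val : {i : Fin n // w i = c} → Fin n)) (fun i => U i.1) ?_ ⟨i, hi⟩
    · rw [hl c ⟨i, hi⟩, Submodule.mem_bot] at key
      refine InG.eq_zero_of_prod Finset.univ (fun i : {i : Fin n // w i = c} => l i.1) ?_ _ (hUG i) key
      rintro ⟨j, hj⟩ - ⟨α, h1, h2⟩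
      exact hres j α (by rw [h1, hi, hj]) h2
    · rintro ⟨i, hi⟩
      rw [Submodule.mem_bot]
      have h1 := h i
      rw [Finset.sum_sub_distrib, ← hDa] at h1
      simp only [Derivation.coeFn_coe, Matrix.submatrix_apply]
      rw [← h1]
      congr 1
      have : ∀ j, w j ≠ c → U j * pderiv j (P i) = 0 := by
        intro j hj
        rcases lt_or_gt_of_ne hj with h2 | h2
        · rw [ih _ h2 j rfl, zero_mul]
        · rw [pderiv_wh_zero w _ _ (hP i) j (by omega), mul_zero]
      rw [← Finset.sum_filter_of_ne (s := Finset.univ) (p := fun j => w j = c)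
        (fun j _ hj => by by_contra h3; exact hj (this j h3))]
      rw [Finset.sum_subtype (p := fun j => w j = c) _ (by simp)]
      refine Finset.sum_congr rfl ?_
      rintro ⟨j, hj⟩ -
      have hPi := hP i
      rw [hi, ← hj] at hPi
      rw [pderiv_wh_const w hw1 (P i) j hPi, hA, smul_eq_C_mul, mul_comm]
  funext i
  exact main _ i rfl
end

theorem wh_finite {K : Type*} [Field K] {n : ℕ} (w : Fin n → ℕ) (hw1 : ∀ i, 1 ≤ w i) (m : ℕ) :
    FiniteDimensional K (weightedHomogeneousSubmodule K w m) := by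
  have hf : {d : Fin n →₀ ℕ | Finsupp.weight w d = m}.Finite :=
    (Finsupp.finite_of_nat_weight_le w (fun x => by have := hw1 x; omega) m).subset
      (fun d hd => le_of_eq hd)
  have := hf.to_subtype
  let f : weightedHomogeneousSubmodule K w m →ₗ[K] ({d : Fin n →₀ ℕ | Finsupp.weight w d = m} → K) :=
    (LinearMap.pi fun d => lcoeff K d.1) ∘ₗ (weightedHomogeneousSubmodule K w m).subtype
  refine FiniteDimensional.of_injective f ?_
  rw [← LinearMap.ker_eq_bot, LinearMap.ker_eq_bot']
  rintro ⟨p, hp⟩ h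
  rw [Submodule.mk_eq_zero]
  ext d
  by_contra hd
  rw [coeff_zero] at hd
  exact hd (congrFun h ⟨d, hp hd⟩)

/-- **Invertibility of the weighted homological operator.**
Let `K` be a field of characteristic zero, `w` a weighting of `K^n`, and `P` a tuple of
polynomials that is quasi-homogeneous of weighted degree `0`.  Let `A i j` be the
coefficient of `x^j` in `P^i` and let `λ` be a `w`-compatible ordering of the eigenvalues
of `A`.  If `λ` has no resonances of weighted degree `k` (`k ≥ 1`), then the adjoint
operator `ad_P` is bijective on quasi-homogeneous polynomial vector fields of weighted
degree `k`: for every such tuple `Y`, there is a unique such tuple `U` with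
`∑ j, (P^j * ∂_j U^i - U^j * ∂_j P^i) = Y^i` for all `i`. -/
theorem adjoint_operator_bijective_of_nonresonant
    (K : Type*) [Field K] [CharZero K] (n : ℕ)
    (w : Fin n → ℕ) (hw1 : ∀ i, 1 ≤ w i) (hwmono : Monotone w)
    (P : Fin n → MvPolynomial (Fin n) K)
    (hP : ∀ (i : Fin n), ∀ β ∈ (P i).support, (∑ j, w j * β j) = w i)
    (A : Matrix (Fin n) (Fin n) K)
    (hA : ∀ i j, A i j = MvPolynomial.coeff (Finsupp.single j 1) (P i))
    (l : Fin n → K)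
    (hl : ∀ c : ℕ, c ∈ Set.range w →
      (A.submatrix
          (Subtype.val : {i : Fin n // w i = c} → Fin n)
          (Subtype.val : {i : Fin n // w i = c} → Fin n)).charpoly =
        ∏ i : {i : Fin n // w i = c}, (Polynomial.X - Polynomial.C (l i.val)))
    (k : ℕ) (hk : 1 ≤ k)
    (hres : ∀ (i : Fin n) (α : Fin n →₀ ℕ), (∑ j, w j * α j) = w i + k →
      (∑ j, (α j : K) * l j) ≠ l i) :
    ∀ Y : Fin n → MvPolynomial (Fin n) K,
      (∀ (i : Fin n), ∀ β ∈ (Y i).support, (∑ j, w j * β j) = w i + k) →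
      ∃! U : Fin n → MvPolynomial (Fin n) K,
        (∀ (i : Fin n), ∀ β ∈ (U i).support, (∑ j, w j * β j) = w i + k) ∧
        (∀ i : Fin n,
          (∑ j, (P j * MvPolynomial.pderiv j (U i) - U j * MvPolynomial.pderiv j (P i)))
            = Y i) := by
  simp only [qh_iff] at hP ⊢
  intro Y hY
  let V : Fin n → Submodule K (MvPolynomial (Fin n) K) :=
    fun i => weightedHomogeneousSubmodule K w (w i + k)
  have hfin : ∀ i, FiniteDimensional K (V i) := fun i => wh_finite w hw1 _
  let L : (∀ i, V i) →ₗ[K] (∀ i, V i) :=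
    { toFun := fun U i => ⟨∑ j, (P j * pderiv j (U i).1 - (U j).1 * pderiv j (P i)), by
        refine Submodule.sum_mem _ fun j _ => Submodule.sub_mem _ ?_ ?_
        · by_cases hj : w j ≤ w i + k
          · have := (hP j).mul (pderiv_wh w _ (w i + k - w j) _ (U i).2 j (by omega))
            rwa [Nat.add_sub_cancel' hj] at this
          · rw [pderiv_wh_zero w _ _ (U i).2 j (by omega), mul_zero]
            exact Submodule.zero_mem _
        · by_cases hj : w j ≤ w i
          · have h2 : IsWeightedHomogeneous w (U j).1 (w j + k) := (U j).2
            have := h2.mul (pderiv_wh w _ (w i - w j) _ (hP i) j (by omega))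
            rwa [show w j + k + (w i - w j) = w i + k by omega] at this
          · rw [pderiv_wh_zero w _ _ (hP i) j (by omega), mul_zero]
            exact Submodule.zero_mem _⟩
      map_add' := by
        intro U U'
        funext i
        apply Subtype.ext
        simp only [Pi.add_apply, Submodule.coe_add, map_add, ← Finset.sum_add_distrib]
        refine Finset.sum_congr rfl fun j _ => ?_
        ring
      map_smul' := by
        intro c U
        funext i
        apply Subtype.ext
        simp only [Pi.smul_apply, Submodule.coe_smul, Derivation.map_smul, RingHom.id_apply,
          Finset.smul_sum, smul_sub, mul_smul_comm, smul_mul_assoc] }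
  have hinj : Function.Injective L := by
    rw [← LinearMap.ker_eq_bot, LinearMap.ker_eq_bot']
    intro U hU
    have := inj_aux w hw1 P hP A hA l hl k hres (fun i => (U i).1) (fun i => (U i).2)
      (fun i => congrArg Subtype.val (congrFun hU i))
    funext i
    exact Subtype.ext (congrFun this i)
  obtain ⟨U, hU⟩ := LinearMap.surjective_of_injective hinj (fun i => ⟨Y i, hY i⟩)
  refine ⟨fun i => (U i).1, ⟨fun i => (U i).2, fun i => congrArg Subtype.val (congrFun hU i)⟩, ?_⟩
  rintro U' ⟨h1, h2⟩
  have : (fun i => (⟨U' i, h1 i⟩ : V i)) = U := by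
    apply hinj
    rw [hU]
    funext i
    exact Subtype.ext (h2 i)
  rw [← this]
end

section
/- Let w be a weighting of ℝ^n and A : Matrix (Fin n) (Fin n) ℝ a matrix with A i j = 0 whenever w j < w i. Let λ : Fin n → ℂ be such that for every value c attained by w, the characteristic polynomial over ℂ of the square submatrix of A.map(ℝ → ℂ) on the index set {i : w i = c} equals the product over {i : w i = c} of (T − λ i). If λ is non-resonant with respect to w — i.e. for every i and every finitely supported α : Fin n → ℕ with ⟨w,α⟩ > w i one has Σ_j (α j)·(λ j) ≠ λ i — then every λ j has nonzero real part: (λ j).re ≠ 0 for all j. -/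
/-- **Weighted non-resonance implies hyperbolicity.**
Let `w` be a weighting of `ℝ^n` and `A` a real matrix with `A i j = 0` whenever
`w j < w i`.  Let `λ : Fin n → ℂ` be a `w`-compatible ordering of the eigenvalues of `A`:
for every value `c` attained by `w`, the characteristic polynomial of the submatrix of
`A` (mapped to `ℂ`) on `{i : w i = c}` equals `∏_{i : w i = c} (T - λ i)`.  If `λ` is
non-resonant with respect to `w`, then every `λ j` has nonzero real part. -/
theorem weighted_nonresonant_hyperbolic
    (n : ℕ) (w : Fin n → ℕ) (hw1 : ∀ i, 1 ≤ w i) (hwmono : Monotone w)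
    (A : Matrix (Fin n) (Fin n) ℝ)
    (hA : ∀ i j, w j < w i → A i j = 0)
    (l : Fin n → ℂ)
    (hl : ∀ c : ℕ, c ∈ Set.range w →
      ((A.map (Complex.ofReal)).submatrix
          (Subtype.val : {i : Fin n // w i = c} → Fin n)
          (Subtype.val : {i : Fin n // w i = c} → Fin n)).charpoly =
        ∏ i : {i : Fin n // w i = c}, (Polynomial.X - Polynomial.C (l i.val)))
    (hres : ∀ (i : Fin n) (α : Fin n →₀ ℕ), w i < ∑ j, w j * α j →
      (∑ j, (α j : ℂ) * l j) ≠ l i) :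
    ∀ j, (l j).re ≠ 0 := by
  intro j hj
  have hc := hl (w j) ⟨j, rfl⟩
  set B : Matrix {i : Fin n // w i = w j} {i : Fin n // w i = w j} ℝ :=
    A.submatrix Subtype.val Subtype.val with hB
  have hM : ((A.map (Complex.ofReal)).submatrix
          (Subtype.val : {i : Fin n // w i = w j} → Fin n)
          (Subtype.val : {i : Fin n // w i = w j} → Fin n)) = B.map (algebraMap ℝ ℂ) := rfl
  rw [hM, Matrix.charpoly_map] at hc
  have h0 : Polynomial.aeval (l j) B.charpoly = 0 := by
    rw [Polynomial.aeval_def, ← Polynomial.eval_map, hc, Polynomial.eval_prod]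
    exact Finset.prod_eq_zero (Finset.mem_univ (⟨j, rfl⟩ : {i : Fin n // w i = w j})) (by simp)
  have h1 : Polynomial.aeval ((starRingEnd ℂ) (l j)) B.charpoly = 0 := by
    rw [Polynomial.aeval_conj, h0, map_zero]
  rw [Polynomial.aeval_def, ← Polynomial.eval_map, hc, Polynomial.eval_prod,
    Finset.prod_eq_zero_iff] at h1
  obtain ⟨⟨k, hk⟩, -, h2⟩ := h1
  have h3 : l k = - l j := by
    simp only [Polynomial.eval_sub, Polynomial.eval_X, Polynomial.eval_C] at h2
    rw [← sub_eq_zero.mp h2]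
    apply Complex.ext <;> simp [hj]
  have hj1 := hw1 j
  apply hres j (Finsupp.single j 2 + Finsupp.single k 1)
  · simp only [Finsupp.add_apply, mul_add, Finset.sum_add_distrib, Finsupp.single_apply,
      mul_ite, mul_zero, Finset.sum_ite_eq, Finset.mem_univ, if_true]
    omega
  · simp only [Finsupp.add_apply, Nat.cast_add, add_mul, Finset.sum_add_distrib,
      Finsupp.single_apply, Nat.cast_ite, Nat.cast_zero, ite_mul, zero_mul,
      Finset.sum_ite_eq, Finset.mem_univ, if_true, h3]
    push_cast
    ring
end

section
/- Let K be a field of characteristic zero and n a natural number. If D is a K-linear derivation of MvPowerSeries (Fin n) K that is locally nilpotent — i.e. for every f there exists k ∈ ℕ with D^∘k(f) = 0, where D^∘k is the k-fold iterate of D — then D = 0. -/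
lemma lnd_leibniz {R A : Type*} [CommRing R] [CommRing A] [Algebra R A] (D : Derivation R A A)
    (n : ℕ) (a b : A) :
    (⇑D)^[n] (a * b) = ∑ ij ∈ Finset.HasAntidiagonal.antidiagonal n,
      n.choose ij.1 • ((⇑D)^[ij.1] a * (⇑D)^[ij.2] b) := by
  induction n with
  | zero => simp
  | succ n ih =>
    rw [Finset.sum_antidiagonal_choose_succ_nsmul (M := A)
      (fun i j => (⇑D)^[i] a * (⇑D)^[j] b) n, Function.iterate_succ_apply', ih, map_sum,
      ← Finset.sum_add_distrib]
    refine Finset.sum_congr rfl fun ij hij => ?_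
    rw [Finset.HasAntidiagonal.mem_antidiagonal] at hij
    have h : n.choose ij.2 = n.choose ij.1 := by
      rw [← hij]; exact (Nat.choose_symm_add).symm
    simp only [Derivation.map_natCast, Derivation.leibniz, Function.iterate_succ_apply', smul_eq_mul, h,
      nsmul_eq_mul]
    ring

lemma lnd_unit {R A : Type*} [CommRing R] [CommRing A] [Algebra R A] [NoZeroDivisors A]
    [CharZero A] (D : Derivation R A A)
    (hD : ∀ f : A, ∃ k : ℕ, (⇑D)^[k] f = 0) (u v : A) (huv : u * v = 1) : D u = 0 := by
  classical
  have h0 : ∀ k, (⇑D)^[k] 0 = 0 := fun k => Function.iterate_fixed (map_zero D) k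
  have key : ∀ f : A, f ≠ 0 → ∃ a, (⇑D)^[a] f ≠ 0 ∧ ∀ m, a < m → (⇑D)^[m] f = 0 := by
    intro f hf
    have hs := Nat.find_spec (hD f)
    have hm := fun m => Nat.find_min (hD f) (m := m)
    generalize Nat.find (hD f) = k at hs hm
    cases k with
    | zero => exact absurd hs hf
    | succ k =>
      refine ⟨k, hm k (Nat.lt_succ_self k), fun m hkm => ?_⟩
      obtain ⟨c, rfl⟩ := Nat.exists_eq_add_of_lt hkm
      rw [show k + c + 1 = c + (k + 1) by omega, Function.iterate_add_apply, hs, h0]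
  have hu : u ≠ 0 := by rintro rfl; simp at huv
  have hv : v ≠ 0 := by rintro rfl; simp at huv
  obtain ⟨a, ha, ha'⟩ := key u hu
  obtain ⟨b, hb, hb'⟩ := key v hv
  have h := lnd_leibniz D (a + b) u v
  rw [Finset.sum_eq_single_of_mem (a, b) (by simp)] at h
  · rcases Nat.eq_zero_or_pos a with h1 | h1
    · subst h1; exact ha' 1 one_pos
    · exfalso
      rw [huv, show a + b = (a + b - 1) + 1 by omega, Function.iterate_succ_apply,
        D.map_one_eq_zero, h0, show (a + b - 1) + 1 = a + b by omega, nsmul_eq_mul] at h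
      refine mul_ne_zero ?_ (mul_ne_zero ha hb) h.symm
      exact_mod_cast (Nat.choose_pos (Nat.le_add_right a b)).ne'
  · rintro ⟨i, j⟩ hij hne
    rw [Finset.HasAntidiagonal.mem_antidiagonal] at hij
    dsimp only at hij ⊢
    rcases lt_trichotomy i a with h1 | h1 | h1
    · rw [hb' j (by omega)]; simp
    · exact absurd (by ext <;> simp <;> omega) hne
    · rw [ha' i h1]; simp


/-- **The only locally nilpotent derivation of a formal power series algebra is zero.**
Let `K` be a field of characteristic zero. If `D` is a `K`-linear derivation of
`MvPowerSeries (Fin n) K` such that for every `f` there exists `k` with `D^[k] f = 0`,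
then `D = 0`. -/
theorem locallyNilpotent_derivation_eq_zero
    (K : Type*) [Field K] [CharZero K] (n : ℕ)
    (D : Derivation K (MvPowerSeries (Fin n) K) (MvPowerSeries (Fin n) K))
    (hD : ∀ f : MvPowerSeries (Fin n) K, ∃ k : ℕ, (⇑D)^[k] f = 0) :
    D = 0 := by
  

  have : CharZero (MvPowerSeries (Fin n) K) := algebraRat.charZero _
  have hunit : ∀ f : MvPowerSeries (Fin n) K, IsUnit f → D f = 0 := by
    intro f hf
    obtain ⟨g, hg⟩ := hf.exists_right_inv
    exact lnd_unit D hD f g hg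
  ext1 f
  rw [Derivation.zero_apply]
  by_cases hf : IsUnit f
  · exact hunit f hf
  · have h1 : IsUnit (1 + f) := by
      rw [MvPowerSeries.isUnit_iff_constantCoeff, isUnit_iff_ne_zero] at hf ⊢
      rw [not_not] at hf
      simp [hf]
    simpa using hunit _ h1
end
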